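/- For every real number M, the set of populated multi-indices β with |β|_≺ ≤ M is finite (coercivity of the ordinal |·|_≺ on populated multi-indices). -/

import Mathlib

open Finsupp

noncomputable section

/-- The index set `I`: symbols `z_k` for `k : ℕ` (left summand) and `z_n` for
`n ∈ ℕ² \ {(0,0)}` (right summand). -/
abbrev RSIdx : Type := ℕ ⊕ {n : ℕ × ℕ // n ≠ (0, 0)}

/-- Multi-indices: finitely supported functions from the index set to `ℕ`. -/
abbrev MIdx : Type := RSIdx →₀ ℕ

/-- The unit multi-index `e_k`. -/
def eK (k : ℕ) : MIdx := Finsupp.single (Sum.inl k) 1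

/-- The unit multi-index `e_n` for `n ≠ (0,0)`. -/
def eN (n : {n : ℕ × ℕ // n ≠ (0, 0)}) : MIdx := Finsupp.single (Sum.inr n) 1

/-- The scaled length `[β] = Σ_k k·β(k) − Σ_{n≠(0,0)} β(n)`. -/
def slen (β : MIdx) : ℤ :=
  β.sum fun i m =>
    match i with
    | Sum.inl k => (k : ℤ) * (m : ℤ)
    | Sum.inr _ => -(m : ℤ)

/-- The parabolic length `|n| = n₁ + 2 n₂` of `n ∈ ℕ²`. -/
def plen (n : ℕ × ℕ) : ℕ := n.1 + 2 * n.2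

/-- The polynomial part `|β|_p = Σ_{n≠(0,0)} |n|·β(n)`. -/
def polyPart (β : MIdx) : ℕ :=
  β.sum fun i m =>
    match i with
    | Sum.inl _ => 0
    | Sum.inr n => plen n.val * m

/-- The homogeneity `|β| = α(1+[β]) + |β|_p`. -/
def homog (α : ℝ) (β : MIdx) : ℝ := α * (1 + (slen β : ℝ)) + (polyPart β : ℝ)

/-- `β` is purely polynomial iff `β = e_n` for some `n ≠ (0,0)`. -/
def PurelyPoly (β : MIdx) : Prop := ∃ n, β = eN n

/-- `β` is populated iff it is purely polynomial or `[β] ≥ 0`. -/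
def Populated (β : MIdx) : Prop := PurelyPoly β ∨ 0 ≤ slen β

/-- The ordinal `|β|_≺ = [β] + (1/2)|β|_p + (1/4)β(0)`. -/
def precNorm (β : MIdx) : ℝ :=
  (slen β : ℝ) + (polyPart β : ℝ) / 2 + (β (Sum.inl 0) : ℝ) / 4

/-!
Weight `z_k` by `max k 1` and `z_n` by `|n|`. All weights are positive and only finitely many
symbols lie below a given weight, so total weight has finite sublevel sets. Each unit of `β(n)`
lowers `[β]` by one but raises `|β|_p` by `|n| ≥ 1`, so the total weight is at most
`[β] + 2|β|_p + β(0) = 4|β|_≺ - 3[β]`. A bound on `|β|_≺` thus bounds the total weight as soon as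
`[β]` is bounded below, and `[β] ≥ -1` for populated `β`.
-/

theorem finite_setOf_weight_le {ι : Type*} {w : ι → ℕ} {N : ℕ} (hw : ∀ i, w i ≠ 0)
    (hN : {i | w i ≤ N}.Finite) : {β : ι →₀ ℕ | weight w β ≤ N}.Finite := by
  classical
  refine (Set.finite_Iic (indicator hN.toFinset fun _ _ => N)).subset fun β hβ i => ?_
  by_cases hi : β i = 0
  · simp only [hi, zero_le]
  have weight_le : w i ≤ N := (le_weight_of_ne_zero' w hi).trans hβ
  rw [indicator_of_mem (hN.mem_toFinset.2 weight_le)]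
  exact (le_weight w (hw i) β).trans hβ

theorem one_le_plen {n : ℕ × ℕ} (hn : n ≠ (0, 0)) : 1 ≤ plen n := by
  rw [Ne, Prod.ext_iff] at hn
  simp only [plen]
  omega

theorem finite_setOf_plen_le (N : ℕ) : {n | plen n ≤ N}.Finite := by
  refine (Set.finite_Iic (N, N)).subset fun n hn => ?_
  have le_N : n.1 + 2 * n.2 ≤ N := hn
  exact ⟨by omega, by omega⟩

/-- The weight of a symbol of the index set, which makes the total weight of a multi-index a
coercive quantity. The maximum with `1` gives `z_0`, which does not contribute to `[β]`, a positive
weight. -/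
def symbolWeight : RSIdx → ℕ
  | Sum.inl k => max k 1
  | Sum.inr n => plen n

theorem symbolWeight_ne_zero (i : RSIdx) : symbolWeight i ≠ 0 :=
  Nat.one_le_iff_ne_zero.1 <| match i with
    | Sum.inl k => le_max_right k 1
    | Sum.inr n => one_le_plen n.2

theorem finite_setOf_symbolWeight_le (N : ℕ) : {i | symbolWeight i ≤ N}.Finite := by
  have finite_polynomial : {n : {n : ℕ × ℕ // n ≠ (0, 0)} | plen n ≤ N}.Finite :=
    (finite_setOf_plen_le N).preimage Subtype.val_injective.injOn
  refine Set.finite_preimage_inl_and_inr.1 ⟨?_, finite_polynomial⟩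
  exact (Set.finite_Iic N).subset fun k hk => (le_max_left k 1).trans hk

theorem weight_symbolWeight_le (β : MIdx) :
    (weight symbolWeight β : ℤ) ≤ slen β + 2 * polyPart β + β (Sum.inl 0) := by
  have apply_zero_eq_sum : (β (Sum.inl 0) : ℤ) =
      ∑ i ∈ β.support, if i = Sum.inl 0 then (β i : ℤ) else 0 := by
    simp +contextual
  rw [weight_apply, apply_zero_eq_sum, slen, polyPart, Finsupp.sum, Finsupp.sum, Finsupp.sum,
    Nat.cast_sum, Nat.cast_sum, Finset.mul_sum, ← Finset.sum_add_distrib,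
    ← Finset.sum_add_distrib]
  refine Finset.sum_le_sum fun i _ => ?_
  rcases i with (_ | k) | n
  · simp [symbolWeight]
  · simp [symbolWeight, mul_comm]
  · have le_plen_mul : β (Sum.inr n) ≤ plen n * β (Sum.inr n) :=
      Nat.le_mul_of_pos_left _ (one_le_plen n.2)
    simp only [symbolWeight, smul_eq_mul, mul_comm (β _), reduceCtorEq, if_false]
    omega

theorem slen_eN (n : {n : ℕ × ℕ // n ≠ (0, 0)}) : slen (eN n) = -1 := by
  simp [slen, eN]

theorem Populated.neg_one_le_slen {β : MIdx} : Populated β → -1 ≤ slen β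
  | Or.inl ⟨n, hn⟩ => by rw [hn, slen_eN]
  | Or.inr hβ => by omega

theorem statement6_general (c : ℤ) (M : ℝ) :
    {β : MIdx | c ≤ slen β ∧ precNorm β ≤ M}.Finite := by
  obtain ⟨N, hN⟩ := exists_nat_ge (4 * M - 3 * c)
  refine (finite_setOf_weight_le symbolWeight_ne_zero (finite_setOf_symbolWeight_le N)).subset ?_
  rintro β ⟨hc, hM⟩
  have c_le_slen : (c : ℝ) ≤ slen β := by exact_mod_cast hc
  have weight_le : (weight symbolWeight β : ℝ) ≤ slen β + 2 * polyPart β + β (Sum.inl 0) := by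
    exact_mod_cast weight_symbolWeight_le β
  have weight_le_N : (weight symbolWeight β : ℝ) ≤ N :=
    calc (weight symbolWeight β : ℝ)
        ≤ slen β + 2 * polyPart β + β (Sum.inl 0) := weight_le
      _ = 4 * precNorm β - 3 * slen β := by rw [precNorm]; ring
      _ ≤ 4 * M - 3 * c := by linarith
      _ ≤ N := hN
  exact_mod_cast weight_le_N

/-- Coercivity of `|·|_≺` on populated multi-indices: for every `M`, the set of
populated `β` with `|β|_≺ ≤ M` is finite. -/
theorem statement6 (M : ℝ) :
    {β : MIdx | Populated β ∧ precNorm β ≤ M}.Finite :=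
  (statement6_general (-1) M).subset fun _ hβ => ⟨hβ.1.neg_one_le_slen, hβ.2⟩
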